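/- Let x > 0 be real and n ≥ 1 a natural number. Define pₙ(L) = Re( Σ_{k=0}^{n−1} (L − iπ)^{n−1−k}·(L + iπ)^{k} ) for real L, and f(n, k, y) = (iπ + log(y+1))^{n−k} − (−iπ + log(y+1))^{n−k} (a complex number, for real y > −1). Then the n-th derivative with respect to s of s ↦ ∫₀^∞ cos(x·u)/(u² + 1)^{s + 1/2} du at s = 1/2 equals (−1)ⁿ · (π/2)·e^{−x} · (A₁ + A₂ + A₃ + A₄), where A₁ = (1/(2π)) ∫_{−π}^{π} Re((log 2 + iφ)ⁿ) dφ, A₂ = − ∫₀^∞ e^{−x·u} · pₙ(log(u+2) + log u) / (u + 2) du, A₃ = x · Σ_{k=0}^{n−1} C(n,k) ∫₀^∞ e^{−x·u} · Re( f(n, k, u+1)/(2πi) ) · (log u)^{k+1}/(k+1) du, and A₄ = − Σ_{k=0}^{n−1} C(n,k) · (n−k) · ∫₀^∞ e^{−x·u} · Re( f(n−1, k, u+1)/(2πi) ) · (log u)^{k+1} / ((k+1)·(u+2)) du. -/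

import Mathlib

/-- The real polynomial `pₙ(L) = Re( Σ_{k=0}^{n−1} (L − iπ)^{n−1−k}·(L + iπ)^{k} )`. -/
noncomputable def besselP (n : ℕ) (L : ℝ) : ℝ :=
  (∑ k ∈ Finset.range n,
      ((L : ℂ) - Real.pi * Complex.I) ^ (n - 1 - k) * ((L : ℂ) + Real.pi * Complex.I) ^ k).re

/-- `f(n, k, y) = (iπ + log(y+1))^{n−k} − (−iπ + log(y+1))^{n−k}`. -/
noncomputable def besselF (n k : ℕ) (y : ℝ) : ℂ :=
  (Real.pi * Complex.I + (Real.log (y + 1) : ℂ)) ^ (n - k)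
    - (-(Real.pi * Complex.I) + (Real.log (y + 1) : ℂ)) ^ (n - k)

/-!
Put `ε = 1/2 - s`. For `0 < ε < 1/2` the Stieltjes representation
`(u² + 1)^(ε - 1) = sin (πε) / π * ∫ r in (0, ∞), r^(ε - 1) / (r + u² + 1)` and the Fourier integral
of `1 / (u² + b²)` turn `T(s, x)` into `e^(-x) * sin (πε) * ∫ e^(-x u) * (u (u + 2))^(ε - 1)`: this
is the integral along the branch cut that a contour rotation would give, obtained by real methods.
That integral diverges at `ε = 0`; multiplying by `ε` and integrating by parts removes the
singularity and leaves `sin (πε)` times integrals of `(u (u + 2))^ε`. Both sides are then analytic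
in `ε`, so their derivatives at `0` agree. Since `e^(t L) * sin (π t) / π` is the exponential
generating function of the polynomials `pₙ(L)`, these derivatives are integrals of
`pₙ (log (u + 2) + log u)`. The binomial expansion in powers of `log u` produces `A₃` and `A₄`; its
constant terms, integrated by parts with the help of `(d/dL) pₙ₊₁ = (n + 1) * pₙ`, collapse to
`pₙ₊₁ (log 2)`, which is `n + 1` times `A₁`.
-/

open MeasureTheory ProbabilityTheory Filter Set Real
open scoped Topology FourierTransform

/-! ### The polynomials `pₙ` -/

lemma hasDerivAt_im {f : ℝ → ℂ} {f' : ℂ} {t : ℝ} (h : HasDerivAt f f' t) :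
    HasDerivAt (fun s => (f s).im) f'.im t :=
  Complex.imCLM.hasFDerivAt.comp_hasDerivAt t h

lemma add_pi_mul_I_pow_sub (n : ℕ) (L : ℝ) :
    ((L : ℂ) + π * Complex.I) ^ n - ((L : ℂ) - π * Complex.I) ^ n
      = 2 * π * Complex.I * ((((L : ℂ) + π * Complex.I) ^ n).im / π : ℝ) := by
  have hconj : (L : ℂ) - π * Complex.I = starRingEnd ℂ (L + π * Complex.I) := by
    simp [sub_eq_add_neg]
  rw [hconj, ← map_pow, Complex.sub_conj]
  push_cast
  field_simp

lemma besselP_eq_im_pow (n : ℕ) (L : ℝ) :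
    besselP n L = (((L : ℂ) + π * Complex.I) ^ n).im / π := by
  have hgeom := geom_sum₂_mul ((L : ℂ) + π * Complex.I) ((L : ℂ) - π * Complex.I) n
  rw [add_pi_mul_I_pow_sub, mul_comm, show (L : ℂ) + π * Complex.I - (L - π * Complex.I)
    = 2 * π * Complex.I by ring] at hgeom
  rw [besselP, Finset.sum_congr rfl fun k _ => mul_comm _ _,
    mul_left_cancel₀ Complex.two_pi_I_ne_zero hgeom, Complex.ofReal_re]

lemma besselP_zero (L : ℝ) : besselP 0 L = 0 := by simp [besselP]

lemma re_besselF_div (n k : ℕ) (y : ℝ) :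
    (besselF n k y / (2 * π * Complex.I)).re = besselP (n - k) (log (y + 1)) := by
  rw [besselF, add_comm (_ * _) (_ : ℂ), neg_add_eq_sub, add_pi_mul_I_pow_sub,
    mul_div_cancel_left₀ _ Complex.two_pi_I_ne_zero, Complex.ofReal_re, besselP_eq_im_pow]

lemma besselP_add (n : ℕ) (a b : ℝ) :
    besselP n (a + b)
      = ∑ k ∈ Finset.range (n + 1), (n.choose k : ℝ) * besselP (n - k) a * b ^ k := by
  rw [besselP_eq_im_pow, Complex.ofReal_add, add_comm (a : ℂ), add_assoc, add_pow, Complex.im_sum,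
    Finset.sum_div]
  refine Finset.sum_congr rfl fun k _ => ?_
  rw [mul_right_comm, ← Complex.ofReal_pow, ← Complex.ofReal_natCast, ← Complex.ofReal_mul,
    Complex.im_ofReal_mul, besselP_eq_im_pow]
  ring

lemma mul_besselP_eq_sum (n : ℕ) (c L : ℝ) :
    c * besselP n L
      = ∑ k ∈ Finset.range (n + 1), (n.choose k : ℝ) * besselP (n - k) 0 * (c * L ^ k) := by
  conv_lhs => rw [← zero_add L, besselP_add, Finset.mul_sum]
  exact Finset.sum_congr rfl fun k _ => mul_left_comm _ _ _

lemma hasDerivAt_besselP (n : ℕ) (L : ℝ) :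
    HasDerivAt (besselP n) (n * besselP (n - 1) L) L := by
  have hpow : HasDerivAt (fun z : ℂ => (z + π * Complex.I) ^ n)
      ((n : ℝ) * (L + π * Complex.I) ^ (n - 1)) L := by
    simpa using ((hasDerivAt_id (L : ℂ)).add_const (π * Complex.I)).fun_pow n
  have him := (hasDerivAt_im hpow.comp_ofReal).div_const π
  rw [Complex.im_ofReal_mul, mul_div_assoc, ← besselP_eq_im_pow] at him
  simpa only [← besselP_eq_im_pow] using him

lemma integral_re_add_mul_I_pow (n : ℕ) (a : ℝ) :
    ∫ φ in (-π)..π, (((a : ℂ) + φ * Complex.I) ^ n).re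
      = 2 * π * besselP (n + 1) a / (n + 1) := by
  have hderiv (φ : ℝ) : HasDerivAt
      (fun φ : ℝ => (((a : ℂ) + φ * Complex.I) ^ (n + 1)).im / (n + 1))
      ((((a : ℂ) + φ * Complex.I) ^ n).re) φ := by
    have hpow : HasDerivAt (fun z : ℂ => (a + z * Complex.I) ^ (n + 1))
        ((n + 1 : ℝ) * ((a + φ * Complex.I) ^ n * Complex.I)) φ := by
      simpa [mul_assoc] using
        (((hasDerivAt_id (φ : ℂ)).mul_const Complex.I).const_add (a : ℂ)).fun_pow (n + 1)
    refine ((hasDerivAt_im hpow.comp_ofReal).div_const _).congr_deriv ?_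
    rw [Complex.im_ofReal_mul, Complex.mul_I_im]
    field_simp
  rw [intervalIntegral.integral_eq_sub_of_hasDerivAt (fun φ _ => hderiv φ)
    (Continuous.intervalIntegrable (by fun_prop) _ _), ← sub_div, ← Complex.sub_im,
    Complex.ofReal_neg, neg_mul, ← sub_eq_add_neg, add_pi_mul_I_pow_sub, ← besselP_eq_im_pow]
  simp

lemma iteratedDeriv_sin_pi_mul_div_pi_zero (n : ℕ) :
    iteratedDeriv n (fun t => sin (π * t) / π) 0 = besselP n 0 := by
  have hscale : iteratedDeriv n (fun t => sin (π * t) / π) 0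
      = π ^ n * iteratedDeriv n sin 0 / π := by
    simp_rw [div_eq_inv_mul]
    rw [iteratedDeriv_const_mul_field, iteratedDeriv_comp_const_mul contDiff_sin]
    simp only [mul_zero]
  rw [hscale, besselP_eq_im_pow, Complex.ofReal_zero, zero_add, mul_pow, ← Complex.ofReal_pow,
    Complex.im_ofReal_mul]
  congr 2
  obtain ⟨k, rfl | rfl⟩ := n.even_or_odd'
  · have hI : Complex.I ^ (2 * k) = ((-1) ^ k : ℝ) := by simp [pow_mul]
    rw [hI, Complex.ofReal_im, iteratedDeriv_even_sin]
    simp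
  · have hI : Complex.I ^ (2 * k + 1) = ((-1) ^ k : ℝ) * Complex.I := by simp [pow_succ, pow_mul]
    rw [hI, Complex.im_ofReal_mul, iteratedDeriv_odd_sin]
    simp

/-! ### Moments of `log w` against a signed density -/

section Moments

variable {α : Type*} [MeasurableSpace α] {μ : Measure α} {g w F : α → ℝ}

-- Mathlib's `mgf` takes a positive measure, so a signed density `g` is treated as the difference of
-- the densities `g⁺` and `g⁻`, `ENNReal.ofReal` being the positive part.
lemma integrable_withDensity_ofReal_iff (hg : AEMeasurable g μ) :
    Integrable F (μ.withDensity fun u => ENNReal.ofReal (g u))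
      ↔ Integrable (fun u => max (g u) 0 * F u) μ := by
  rw [integrable_withDensity_iff_integrable_smul₀' hg.ennreal_ofReal
    (ae_of_all _ fun _ => ENNReal.ofReal_lt_top)]
  simp only [ENNReal.toReal_ofReal', smul_eq_mul]

lemma integral_withDensity_ofReal (hg : AEMeasurable g μ) :
    ∫ u, F u ∂μ.withDensity (fun u => ENNReal.ofReal (g u)) = ∫ u, max (g u) 0 * F u ∂μ := by
  rw [integral_withDensity_eq_integral_toReal_smul₀ hg.ennreal_ofReal
    (ae_of_all _ fun _ => ENNReal.ofReal_lt_top)]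
  simp only [ENNReal.toReal_ofReal', smul_eq_mul]

lemma integrable_withDensity_ofReal (hg : AEMeasurable g μ)
    (h : Integrable (fun u => g u * F u) μ) :
    Integrable F (μ.withDensity fun u => ENNReal.ofReal (g u)) := by
  rw [integrable_withDensity_ofReal_iff hg]
  refine (h.indicator₀ (nullMeasurableSet_lt aemeasurable_const hg :
    NullMeasurableSet {u | 0 < g u} μ)).congr (ae_of_all _ fun u => ?_)
  by_cases hu : 0 < g u
  · simp [hu, hu.le]
  · simp [hu, not_lt.1 hu]

lemma integrable_mul_of_withDensity (hg : AEMeasurable g μ)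
    (hpos : Integrable F (μ.withDensity fun u => ENNReal.ofReal (g u)))
    (hneg : Integrable F (μ.withDensity fun u => ENNReal.ofReal (-g u))) :
    Integrable (fun u => g u * F u) μ := by
  rw [integrable_withDensity_ofReal_iff hg] at hpos
  rw [integrable_withDensity_ofReal_iff hg.fun_neg] at hneg
  simpa only [Pi.sub_def, ← sub_mul, max_zero_sub_max_neg_zero_eq_self] using hpos.sub hneg

lemma integral_withDensity_sub_integral_withDensity (hg : AEMeasurable g μ)
    (h : Integrable (fun u => g u * F u) μ) :
    ∫ u, F u ∂μ.withDensity (fun u => ENNReal.ofReal (g u))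
      - ∫ u, F u ∂μ.withDensity (fun u => ENNReal.ofReal (-g u)) = ∫ u, g u * F u ∂μ := by
  have hpos := integrable_withDensity_ofReal hg h
  have hneg := integrable_withDensity_ofReal hg.fun_neg (by simpa using h.neg)
  rw [integrable_withDensity_ofReal_iff hg] at hpos
  rw [integrable_withDensity_ofReal_iff hg.fun_neg] at hneg
  rw [integral_withDensity_ofReal hg, integral_withDensity_ofReal hg.fun_neg,
    ← integral_sub hpos hneg]
  simp only [← sub_mul, max_zero_sub_max_neg_zero_eq_self]

lemma rpow_eq_exp_log_ae (hw : ∀ᵐ u ∂μ, 0 < w u) (t : ℝ) :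
    (fun u => g u * w u ^ t) =ᵐ[μ] fun u => g u * exp (t * log (w u)) := by
  filter_upwards [hw] with u hu
  rw [rpow_def_of_pos hu, mul_comm t]

lemma aemeasurable_of_eventually_integrable_mul_rpow
    (h : ∀ᶠ t in 𝓝 (0 : ℝ), Integrable (fun u => g u * w u ^ t) μ) : AEMeasurable g μ := by
  simpa using h.self_of_nhds.aemeasurable

lemma zero_mem_interior_integrableExpSet (hw : ∀ᵐ u ∂μ, 0 < w u)
    (h : ∀ᶠ t in 𝓝 (0 : ℝ), Integrable (fun u => g u * w u ^ t) μ) :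
    0 ∈ interior (integrableExpSet (fun u => log (w u))
      (μ.withDensity fun u => ENNReal.ofReal (g u))) := by
  rw [mem_interior_iff_mem_nhds]
  filter_upwards [h] with t ht
  exact integrable_withDensity_ofReal (aemeasurable_of_eventually_integrable_mul_rpow h)
    (ht.congr (rpow_eq_exp_log_ae hw t))

lemma eventually_integrable_neg_mul_rpow
    (h : ∀ᶠ t in 𝓝 (0 : ℝ), Integrable (fun u => g u * w u ^ t) μ) :
    ∀ᶠ t in 𝓝 (0 : ℝ), Integrable (fun u => -g u * w u ^ t) μ := by
  filter_upwards [h] with t ht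
  simpa using ht.neg

lemma integral_mul_rpow_eventuallyEq_mgf_sub_mgf (hw : ∀ᵐ u ∂μ, 0 < w u)
    (h : ∀ᶠ t in 𝓝 (0 : ℝ), Integrable (fun u => g u * w u ^ t) μ) :
    (fun t : ℝ => ∫ u, g u * w u ^ t ∂μ) =ᶠ[𝓝 0]
      mgf (fun u => log (w u)) (μ.withDensity fun u => ENNReal.ofReal (g u))
        - mgf (fun u => log (w u)) (μ.withDensity fun u => ENNReal.ofReal (-g u)) := by
  filter_upwards [h] with t ht
  have hexp := rpow_eq_exp_log_ae (g := g) hw t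
  rw [integral_congr_ae hexp, Pi.sub_apply, mgf, mgf,
    integral_withDensity_sub_integral_withDensity
      (aemeasurable_of_eventually_integrable_mul_rpow h) (ht.congr hexp)]

lemma analyticAt_integral_mul_rpow (hw : ∀ᵐ u ∂μ, 0 < w u)
    (h : ∀ᶠ t in 𝓝 (0 : ℝ), Integrable (fun u => g u * w u ^ t) μ) :
    AnalyticAt ℝ (fun t : ℝ => ∫ u, g u * w u ^ t ∂μ) 0 :=
  ((analyticAt_mgf (zero_mem_interior_integrableExpSet hw h)).sub
    (analyticAt_mgf (zero_mem_interior_integrableExpSet hw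
      (eventually_integrable_neg_mul_rpow h)))).congr
    (integral_mul_rpow_eventuallyEq_mgf_sub_mgf hw h).symm

lemma analyticAt_sin_mul_integral_mul_rpow (hw : ∀ᵐ u ∂μ, 0 < w u)
    (h : ∀ᶠ t in 𝓝 (0 : ℝ), Integrable (fun u => g u * w u ^ t) μ) :
    AnalyticAt ℝ (fun t : ℝ => sin (π * t) / π * ∫ u, g u * w u ^ t ∂μ) 0 :=
  AnalyticAt.fun_mul (by fun_prop) (analyticAt_integral_mul_rpow hw h)

lemma integrable_mul_log_pow (hw : ∀ᵐ u ∂μ, 0 < w u)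
    (h : ∀ᶠ t in 𝓝 (0 : ℝ), Integrable (fun u => g u * w u ^ t) μ) (n : ℕ) :
    Integrable (fun u => g u * log (w u) ^ n) μ :=
  integrable_mul_of_withDensity (aemeasurable_of_eventually_integrable_mul_rpow h)
    (integrable_pow_of_mem_interior_integrableExpSet (zero_mem_interior_integrableExpSet hw h) n)
    (integrable_pow_of_mem_interior_integrableExpSet (zero_mem_interior_integrableExpSet hw
      (eventually_integrable_neg_mul_rpow h)) n)

lemma iteratedDeriv_integral_mul_rpow_zero (hw : ∀ᵐ u ∂μ, 0 < w u)
    (h : ∀ᶠ t in 𝓝 (0 : ℝ), Integrable (fun u => g u * w u ^ t) μ) (n : ℕ) :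
    iteratedDeriv n (fun t : ℝ => ∫ u, g u * w u ^ t ∂μ) 0 = ∫ u, g u * log (w u) ^ n ∂μ := by
  have hpos := zero_mem_interior_integrableExpSet hw h
  have hneg := zero_mem_interior_integrableExpSet hw (eventually_integrable_neg_mul_rpow h)
  rw [(integral_mul_rpow_eventuallyEq_mgf_sub_mgf hw h).iteratedDeriv_eq,
    iteratedDeriv_sub (analyticAt_mgf hpos).contDiffAt (analyticAt_mgf hneg).contDiffAt,
    iteratedDeriv_mgf_zero hpos, iteratedDeriv_mgf_zero hneg]
  exact integral_withDensity_sub_integral_withDensity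
    (aemeasurable_of_eventually_integrable_mul_rpow h) (integrable_mul_log_pow hw h n)

lemma integrable_mul_besselP_log (hw : ∀ᵐ u ∂μ, 0 < w u)
    (h : ∀ᶠ t in 𝓝 (0 : ℝ), Integrable (fun u => g u * w u ^ t) μ) (n : ℕ) :
    Integrable (fun u => g u * besselP n (log (w u))) μ := by
  rw [funext fun u => mul_besselP_eq_sum n (g u) (log (w u))]
  exact integrable_finsetSum _ fun k _ => (integrable_mul_log_pow hw h k).const_mul _

lemma iteratedDeriv_sin_mul_integral_mul_rpow_zero (hw : ∀ᵐ u ∂μ, 0 < w u)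
    (h : ∀ᶠ t in 𝓝 (0 : ℝ), Integrable (fun u => g u * w u ^ t) μ) (n : ℕ) :
    iteratedDeriv n (fun t : ℝ => sin (π * t) / π * ∫ u, g u * w u ^ t ∂μ) 0
      = ∫ u, g u * besselP n (log (w u)) ∂μ := by
  have hsin : ContDiffAt ℝ n (fun t : ℝ => sin (π * t) / π) 0 := by fun_prop
  rw [funext fun u => mul_besselP_eq_sum n (g u) (log (w u)),
    integral_finsetSum _ fun k _ => (integrable_mul_log_pow hw h k).const_mul _]
  simp only [mul_comm (sin _ / _)]
  rw [iteratedDeriv_fun_mul (analyticAt_integral_mul_rpow hw h).contDiffAt hsin]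
  refine Finset.sum_congr rfl fun k _ => ?_
  rw [iteratedDeriv_sin_pi_mul_div_pi_zero, iteratedDeriv_integral_mul_rpow_zero hw h,
    integral_const_mul]
  ring

lemma integral_mul_besselP_add {a b : α → ℝ} (n : ℕ)
    (h : ∀ k, Integrable (fun u => g u * besselP (n - k) (a u) * b u ^ k) μ) :
    ∫ u, g u * besselP n (a u + b u) ∂μ = ∫ u, g u * besselP n (a u) ∂μ +
      ∑ k ∈ Finset.range n, (n.choose (k + 1) : ℝ) *
        ∫ u, g u * besselP (n - (k + 1)) (a u) * b u ^ (k + 1) ∂μ := by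
  have hexp : (fun u => g u * besselP n (a u + b u)) = fun u => ∑ k ∈ Finset.range (n + 1),
      (n.choose k : ℝ) * (g u * besselP (n - k) (a u) * b u ^ k) := by
    funext u
    rw [besselP_add, Finset.mul_sum]
    exact Finset.sum_congr rfl fun k _ => by ring
  rw [hexp, integral_finsetSum _ fun k _ => (h k).const_mul _, Finset.sum_range_succ', add_comm]
  simp only [integral_const_mul, Nat.choose_zero_right, Nat.cast_one, one_mul, pow_zero, mul_one,
    Nat.sub_zero]

end Moments

/-! ### The Fourier integral of `1 / (u² + b²)` -/

lemma integral_cexp_mul_exp_neg_mul_abs {a : ℝ} (ha : 0 < a) (ξ : ℝ) :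
    ∫ v : ℝ, Complex.exp ((ξ * v : ℝ) * Complex.I) * (exp (-(a * |v|)) : ℝ)
      = (2 * a / (ξ ^ 2 + a ^ 2) : ℝ) := by
  set p : ℂ := -a + ξ * Complex.I with hp
  set q : ℂ := a + ξ * Complex.I with hq
  have hpre : p.re < 0 := by simpa [hp] using ha
  have hqre : 0 < q.re := by simpa [hq] using ha
  have hIoi : EqOn (fun v : ℝ => Complex.exp ((ξ * v : ℝ) * Complex.I) * (exp (-(a * |v|)) : ℝ))
      (fun v : ℝ => Complex.exp (p * v)) (Ioi 0) := fun v hv => by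
    simp only [abs_of_pos (mem_Ioi.1 hv), Complex.ofReal_exp, ← Complex.exp_add, hp]
    push_cast
    ring_nf
  have hIic : EqOn (fun v : ℝ => Complex.exp ((ξ * v : ℝ) * Complex.I) * (exp (-(a * |v|)) : ℝ))
      (fun v : ℝ => Complex.exp (q * v)) (Iic 0) := fun v hv => by
    simp only [abs_of_nonpos (mem_Iic.1 hv), Complex.ofReal_exp, ← Complex.exp_add, hq]
    push_cast
    ring_nf
  rw [← intervalIntegral.integral_Iic_add_Ioi (b := 0)
      ((integrableOn_congr_fun hIic measurableSet_Iic).2 (integrableOn_exp_mul_complex_Iic hqre 0))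
      ((integrableOn_congr_fun hIoi measurableSet_Ioi).2 (integrableOn_exp_mul_complex_Ioi hpre 0)),
    setIntegral_congr_fun measurableSet_Iic hIic, setIntegral_congr_fun measurableSet_Ioi hIoi,
    integral_exp_mul_complex_Iic hqre, integral_exp_mul_complex_Ioi hpre]
  have hp0 : p ≠ 0 := fun h => by simp [h] at hpre
  have hq0 : q ≠ 0 := fun h => by simp [h] at hqre
  have hpq : p * q = -(ξ ^ 2 + a ^ 2 : ℝ) := by
    simp only [hp, hq]
    push_cast
    linear_combination (ξ : ℂ) ^ 2 * Complex.I_sq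
  calc Complex.exp (q * (0 : ℝ)) / q + -Complex.exp (p * (0 : ℝ)) / p
      = (q - p) / -(p * q) := by
        simp only [Complex.ofReal_zero, mul_zero, Complex.exp_zero]
        field_simp
        ring
    _ = _ := by
      rw [hpq, neg_neg, show q - p = (2 * a : ℝ) by simp only [hp, hq]; push_cast; ring,
        ← Complex.ofReal_div]

lemma fourier_exp_neg_mul_abs {a : ℝ} (ha : 0 < a) (ξ : ℝ) :
    𝓕 (fun v : ℝ => ((exp (-(2 * π * a * |v|)) : ℝ) : ℂ)) ξ
      = (a / π * (ξ ^ 2 + a ^ 2)⁻¹ : ℝ) := by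
  have h := integral_cexp_mul_exp_neg_mul_abs (a := 2 * π * a) (by positivity) (-2 * π * ξ)
  rw [Real.fourier_real_eq_integral_exp_smul]
  simp only [mul_right_comm (-2 * π) _ ξ, smul_eq_mul, h]
  congr 1
  field

lemma integrable_exp_neg_mul_abs {a : ℝ} (ha : 0 < a) :
    Integrable fun v : ℝ => ((exp (-(a * |v|)) : ℝ) : ℂ) := by
  refine Integrable.of_integral_ne_zero ?_
  have h := integral_cexp_mul_exp_neg_mul_abs ha 0
  simp only [zero_mul, Complex.ofReal_zero, Complex.exp_zero, one_mul] at h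
  rw [h, Complex.ofReal_ne_zero]
  positivity

lemma integrable_inv_sq_add_sq {b : ℝ} (hb : 0 < b) :
    Integrable fun u : ℝ => (u ^ 2 + b ^ 2)⁻¹ := by
  refine ((integrable_inv_one_add_sq.comp_div hb.ne').const_mul (b ^ 2)⁻¹).congr
    (ae_of_all _ fun u => ?_)
  field_simp
  ring

lemma integral_cexp_mul_inv_sq_add_sq {b : ℝ} (hb : 0 < b) (x : ℝ) :
    ∫ v : ℝ, Complex.exp ((x * v : ℝ) * Complex.I) * (b / π * (v ^ 2 + b ^ 2)⁻¹ : ℝ)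
      = (exp (-(b * |x|)) : ℝ) := by
  have hfourier := funext (fourier_exp_neg_mul_abs hb)
  have hint : Integrable fun ξ : ℝ => ((b / π * (ξ ^ 2 + b ^ 2)⁻¹ : ℝ) : ℂ) :=
    ((integrable_inv_sq_add_sq hb).const_mul _).ofReal
  have hinv := congrFun (Continuous.fourierInv_fourier_eq (by fun_prop)
    (integrable_exp_neg_mul_abs (by positivity)) (hfourier ▸ hint)) (x / (2 * π))
  have hphase (v : ℝ) : 2 * π * inner ℝ v (x / (2 * π)) = x * v := by
    simp only [RCLike.inner_apply, conj_trivial]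
    field
  rw [hfourier, Real.fourierInv_eq', abs_div, abs_of_pos two_pi_pos,
    show 2 * π * b * (|x| / (2 * π)) = b * |x| by field] at hinv
  simpa only [hphase, smul_eq_mul] using hinv

lemma integral_cos_div_sq_add_sq {b x : ℝ} (hb : 0 < b) (hx : 0 ≤ x) :
    ∫ u in Ioi (0 : ℝ), cos (x * u) / (u ^ 2 + b ^ 2) = π / (2 * b) * exp (-(b * x)) := by
  have hint : Integrable fun v : ℝ =>
      Complex.exp ((x * v : ℝ) * Complex.I) * (b / π * (v ^ 2 + b ^ 2)⁻¹ : ℝ) :=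
    ((integrable_inv_sq_add_sq hb).const_mul _).ofReal.bdd_mul (c := 1) (by fun_prop)
      (ae_of_all _ fun v => (Complex.norm_exp_ofReal_mul_I _).le)
  have hre := congrArg Complex.re (integral_cexp_mul_inv_sq_add_sq hb x)
  rw [Complex.ofReal_re, ← RCLike.re_to_complex, ← integral_re hint] at hre
  have heven (v : ℝ) : RCLike.re (Complex.exp ((x * v : ℝ) * Complex.I)
      * (b / π * (v ^ 2 + b ^ 2)⁻¹ : ℝ)) = b / π * (cos (x * |v|) / (|v| ^ 2 + b ^ 2)) := by
    have hcos : cos (x * |v|) = cos (x * v) := by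
      rw [← cos_abs, abs_mul, abs_abs, ← abs_mul, cos_abs]
    rw [hcos, sq_abs, RCLike.re_to_complex, Complex.re_mul_ofReal, Complex.exp_ofReal_mul_I_re]
    ring
  simp only [heven] at hre
  rw [integral_const_mul, integral_comp_abs (f := fun v => cos (x * v) / (v ^ 2 + b ^ 2)),
    abs_of_nonneg hx] at hre
  rw [← hre]
  field

/-! ### The cosine integral as an integral along the branch cut -/

lemma integrableOn_rpow_mul_exp_neg_mul {t b : ℝ} (ht : -1 < t) (hb : 0 < b) :
    IntegrableOn (fun u : ℝ => u ^ t * exp (-(b * u))) (Ioi 0) := by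
  simpa only [rpow_one, neg_mul] using integrableOn_rpow_mul_exp_neg_mul_rpow ht one_pos hb

lemma integral_rpow_neg_mul_exp_neg_mul {ε c : ℝ} (h1 : ε < 1) (hc : 0 < c) :
    ∫ t in Ioi (0 : ℝ), t ^ (-ε) * exp (-(c * t)) = Gamma (1 - ε) / c ^ (1 - ε) := by
  rw [show -ε = 1 - ε - 1 by ring, integral_rpow_mul_exp_neg_mul_Ioi (by linarith) hc, one_div,
    inv_rpow hc.le, inv_mul_eq_div]

lemma integral_rpow_mul_exp_neg_add_mul {ε t : ℝ} (h0 : 0 < ε) (ht : 0 < t) (c : ℝ) :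
    ∫ r in Ioi (0 : ℝ), r ^ (ε - 1) * exp (-((r + c) * t))
      = Gamma ε * (t ^ (-ε) * exp (-(c * t))) := by
  have hsplit (r : ℝ) : r ^ (ε - 1) * exp (-((r + c) * t))
      = r ^ (ε - 1) * exp (-(t * r)) * exp (-(c * t)) := by
    rw [mul_assoc, ← exp_add]
    ring_nf
  simp only [hsplit]
  rw [integral_mul_const, integral_rpow_mul_exp_neg_mul_Ioi h0 ht, one_div, inv_rpow ht.le,
    ← rpow_neg ht.le]
  ring

lemma integrable_uncurry_rpow_mul_exp_neg_add_mul {ε c : ℝ} (h0 : 0 < ε) (h1 : ε < 1)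
    (hc : 0 < c) :
    Integrable (Function.uncurry fun r t : ℝ => r ^ (ε - 1) * exp (-((r + c) * t)))
      ((volume.restrict (Ioi 0)).prod (volume.restrict (Ioi 0))) := by
  have hmeas : Measurable (Function.uncurry fun r t : ℝ => r ^ (ε - 1) * exp (-((r + c) * t))) := by
    simp only [Function.uncurry_def]
    fun_prop
  refine (integrable_prod_iff' hmeas.aestronglyMeasurable).2 ⟨?_, ?_⟩
  · filter_upwards [ae_restrict_mem measurableSet_Ioi] with t ht
    have ht : 0 < t := ht
    refine Integrable.of_integral_ne_zero ?_
    simp only [Function.uncurry_apply_pair]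
    rw [integral_rpow_mul_exp_neg_add_mul h0 ht]
    have := Gamma_pos_of_pos h0
    positivity
  · refine ((integrableOn_rpow_mul_exp_neg_mul (t := -ε) (by linarith) hc).const_mul
      (Gamma ε)).congr ?_
    filter_upwards [ae_restrict_mem measurableSet_Ioi] with t ht
    rw [← integral_rpow_mul_exp_neg_add_mul h0 ht c]
    refine setIntegral_congr_fun measurableSet_Ioi fun r hr => ?_
    have hr : 0 < r := hr
    exact (norm_of_nonneg (by positivity)).symm

lemma integral_rpow_div_add {ε c : ℝ} (h0 : 0 < ε) (h1 : ε < 1) (hc : 0 < c) :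
    ∫ r in Ioi (0 : ℝ), r ^ (ε - 1) / (r + c) = π / sin (π * ε) / c ^ (1 - ε) := by
  have hinner (r : ℝ) (hr : r ∈ Ioi 0) :
      r ^ (ε - 1) / (r + c) = ∫ t in Ioi (0 : ℝ), r ^ (ε - 1) * exp (-((r + c) * t)) := by
    have hrc : 0 < r + c := add_pos hr hc
    simp only [integral_const_mul, ← neg_mul]
    rw [integral_exp_mul_Ioi (neg_lt_zero.2 hrc), mul_zero, exp_zero, neg_div_neg_eq, mul_one_div]
  calc ∫ r in Ioi (0 : ℝ), r ^ (ε - 1) / (r + c)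
      = ∫ r in Ioi (0 : ℝ), ∫ t in Ioi (0 : ℝ), r ^ (ε - 1) * exp (-((r + c) * t)) :=
        setIntegral_congr_fun measurableSet_Ioi hinner
    _ = ∫ t in Ioi (0 : ℝ), ∫ r in Ioi (0 : ℝ), r ^ (ε - 1) * exp (-((r + c) * t)) :=
        integral_integral_swap (integrable_uncurry_rpow_mul_exp_neg_add_mul h0 h1 hc)
    _ = Gamma ε * (Gamma (1 - ε) / c ^ (1 - ε)) := by
        rw [setIntegral_congr_fun measurableSet_Ioi
            fun t ht => integral_rpow_mul_exp_neg_add_mul h0 ht c,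
          integral_const_mul, integral_rpow_neg_mul_exp_neg_mul h1 hc]
    _ = π / sin (π * ε) / c ^ (1 - ε) := by rw [← mul_div_assoc, Gamma_mul_Gamma_one_sub]

lemma sin_pi_mul_pos {ε : ℝ} (h0 : 0 < ε) (h1 : ε < 1) : 0 < sin (π * ε) :=
  sin_pos_of_pos_of_lt_pi (by positivity) (mul_lt_of_lt_one_right pi_pos h1)

lemma integrableOn_rpow_div_add {ε c : ℝ} (h0 : 0 < ε) (h1 : ε < 1) (hc : 0 < c) :
    IntegrableOn (fun r : ℝ => r ^ (ε - 1) / (r + c)) (Ioi 0) := by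
  refine Integrable.of_integral_ne_zero ?_
  rw [integral_rpow_div_add h0 h1 hc]
  have := sin_pi_mul_pos h0 h1
  positivity

/-- The integral `T(s, x) = ∫₀^∞ cos (x u) / (u² + 1) ^ (s + 1/2) du` of the theorem, with `x` first
so that `besselT x` is a function of the order `s`. -/
noncomputable def besselT (x s : ℝ) : ℝ :=
  ∫ u in Ioi (0 : ℝ), cos (x * u) / (u ^ 2 + 1) ^ (s + 1 / 2)

lemma integrable_inv_sq_add_one_rpow {s : ℝ} (hs : 1 / 2 < s) :
    Integrable fun u : ℝ => ((u ^ 2 + 1) ^ s)⁻¹ := by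
  refine (integrable_rpow_neg_one_add_norm_sq (E := ℝ) (μ := volume) (r := 2 * s)
    (by simp; linarith)).congr (ae_of_all _ fun u => ?_)
  simp only [norm_eq_abs, sq_abs]
  rw [← rpow_neg (by positivity), add_comm]
  congr 1
  ring

lemma integrable_cos_div_sq_add_one_rpow (x : ℝ) {s : ℝ} (hs : 1 / 2 < s) :
    Integrable fun u : ℝ => cos (x * u) / (u ^ 2 + 1) ^ s :=
  (integrable_inv_sq_add_one_rpow hs).bdd_mul (c := 1) (by fun_prop)
    (ae_of_all _ fun u => abs_cos_le_one (x * u))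

lemma analyticAt_besselT (x : ℝ) {s : ℝ} (hs : 0 < s) : AnalyticAt ℝ (besselT x) s := by
  have hint : ∀ᶠ t in 𝓝 (0 : ℝ), IntegrableOn
      (fun u => cos (x * u) / (u ^ 2 + 1) ^ (s + 1 / 2) * (u ^ 2 + 1) ^ t) (Ioi 0) := by
    filter_upwards [Iio_mem_nhds hs] with t ht
    refine (integrable_cos_div_sq_add_one_rpow x (s := s + 1 / 2 - t)
      (by linarith [mem_Iio.1 ht])).integrableOn.congr (ae_of_all _ fun u => ?_)
    have hu : 0 < u ^ 2 + 1 := by positivity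
    simp only [rpow_sub hu, div_div_eq_mul_div, mul_div_right_comm]
  have hshift : besselT x = fun z => ∫ u in Ioi (0 : ℝ),
      cos (x * u) / (u ^ 2 + 1) ^ (s + 1 / 2) * (u ^ 2 + 1) ^ (s - z) := by
    funext z
    refine setIntegral_congr_fun measurableSet_Ioi fun u _ => ?_
    have hu : 0 < u ^ 2 + 1 := by positivity
    rw [show z + 1 / 2 = s + 1 / 2 - (s - z) by ring, rpow_sub hu, div_div_eq_mul_div,
      mul_div_right_comm]
  rw [hshift]
  refine AnalyticAt.comp_of_eq (f := fun z => s - z)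
    (analyticAt_integral_mul_rpow (ae_of_all _ fun u => ?_) hint) (by fun_prop) (sub_self s)
  positivity

-- The substitution `r = u * (u + 2)`, chosen so that `√(r + 1) = u + 1`.
lemma integral_Ioi_eq_integral_comp_mul_add_two (f : ℝ → ℝ) :
    ∫ r in Ioi (0 : ℝ), f r = ∫ u in Ioi (0 : ℝ), 2 * (u + 1) * f (u * (u + 2)) := by
  have himage : (fun u : ℝ => u * (u + 2)) '' Ioi 0 = Ioi 0 := by
    ext r
    simp only [mem_image, mem_Ioi]
    constructor
    · rintro ⟨u, hu, rfl⟩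
      positivity
    · intro hr
      refine ⟨√(r + 1) - 1, ?_, ?_⟩
      · rw [sub_pos, lt_sqrt one_pos.le]
        linarith
      · linear_combination sq_sqrt (by linarith : 0 ≤ r + 1)
  have hderiv (u : ℝ) (_ : u ∈ Ioi 0) :
      HasDerivWithinAt (fun u : ℝ => u * (u + 2)) (2 * (u + 1)) (Ioi 0) u :=
    (((hasDerivAt_id u).mul ((hasDerivAt_id u).add_const 2)).congr_deriv
      (by simp; ring)).hasDerivWithinAt
  have hmono : MonotoneOn (fun u : ℝ => u * (u + 2)) (Ioi 0) := fun u hu v hv huv => by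
    have hu : 0 < u := hu
    have hv : 0 < v := hv
    dsimp only
    gcongr
  conv_lhs => rw [← himage]
  exact integral_image_eq_integral_deriv_smul_of_monotoneOn measurableSet_Ioi hderiv hmono f

lemma integrable_uncurry_cos_mul_rpow_div (x : ℝ) {ε : ℝ} (h0 : 0 < ε) (h1 : ε < 1 / 2) :
    Integrable (Function.uncurry fun u r : ℝ =>
        cos (x * u) * (r ^ (ε - 1) / (r + (u ^ 2 + 1))))
      ((volume.restrict (Ioi 0)).prod (volume.restrict (Ioi 0))) := by
  have hε : ε < 1 := by linarith
  have hmeas : Measurable (Function.uncurry fun u r : ℝ =>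
      cos (x * u) * (r ^ (ε - 1) / (r + (u ^ 2 + 1)))) := by
    simp only [Function.uncurry_def]
    fun_prop
  refine (integrable_prod_iff hmeas.aestronglyMeasurable).2 ⟨ae_of_all _ fun u =>
    (integrableOn_rpow_div_add h0 hε (by positivity : 0 < u ^ 2 + 1)).const_mul (cos (x * u)), ?_⟩
  refine ((integrable_cos_div_sq_add_one_rpow x (s := 1 - ε) (by linarith)).norm.const_mul
    (π / sin (π * ε))).integrableOn.congr (ae_of_all _ fun u => ?_)
  have hu : 0 < u ^ 2 + 1 := by positivity
  calc π / sin (π * ε) * ‖cos (x * u) / (u ^ 2 + 1) ^ (1 - ε)‖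
      = ‖cos (x * u)‖ * (π / sin (π * ε) / (u ^ 2 + 1) ^ (1 - ε)) := by
        rw [norm_div, norm_of_nonneg (rpow_nonneg hu.le _)]
        ring
    _ = ∫ r in Ioi (0 : ℝ), ‖cos (x * u)‖ * (r ^ (ε - 1) / (r + (u ^ 2 + 1))) := by
        rw [integral_const_mul, integral_rpow_div_add h0 hε hu]
    _ = ∫ r in Ioi (0 : ℝ), ‖cos (x * u) * (r ^ (ε - 1) / (r + (u ^ 2 + 1)))‖ := by
        refine setIntegral_congr_fun measurableSet_Ioi fun r hr => ?_
        have hr : 0 < r := hr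
        simp only [norm_mul, norm_of_nonneg (by positivity : 0 ≤ r ^ (ε - 1) / (r + (u ^ 2 + 1)))]

lemma besselT_half_sub_eq_integral_sqrt {x ε : ℝ} (hx : 0 ≤ x) (h0 : 0 < ε) (h1 : ε < 1 / 2) :
    besselT x (1 / 2 - ε) = sin (π * ε) / 2 *
      ∫ r in Ioi (0 : ℝ), r ^ (ε - 1) * (exp (-(√(r + 1) * x)) / √(r + 1)) := by
  have hε : ε < 1 := by linarith
  have hsin := sin_pi_mul_pos h0 hε
  have hstieltjes (u : ℝ) : cos (x * u) / (u ^ 2 + 1) ^ (1 / 2 - ε + 1 / 2)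
      = sin (π * ε) / π * ∫ r in Ioi (0 : ℝ), cos (x * u) * (r ^ (ε - 1) / (r + (u ^ 2 + 1))) := by
    rw [integral_const_mul, integral_rpow_div_add h0 hε (by positivity),
      show 1 / 2 - ε + 1 / 2 = 1 - ε by ring]
    field
  have hcos (r : ℝ) (hr : r ∈ Ioi 0) :
      ∫ u in Ioi (0 : ℝ), cos (x * u) * (r ^ (ε - 1) / (r + (u ^ 2 + 1)))
        = π / 2 * (r ^ (ε - 1) * (exp (-(√(r + 1) * x)) / √(r + 1))) := by
    have hr1 : 0 < r + 1 := add_pos hr one_pos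
    have hpt (u : ℝ) : cos (x * u) * (r ^ (ε - 1) / (r + (u ^ 2 + 1)))
        = r ^ (ε - 1) * (cos (x * u) / (u ^ 2 + √(r + 1) ^ 2)) := by
      rw [sq_sqrt hr1.le]
      ring
    simp only [hpt]
    rw [integral_const_mul, integral_cos_div_sq_add_sq (sqrt_pos.2 hr1) hx]
    ring
  simp only [besselT, hstieltjes]
  rw [integral_const_mul, integral_integral_swap (integrable_uncurry_cos_mul_rpow_div x h0 h1),
    setIntegral_congr_fun measurableSet_Ioi hcos, integral_const_mul]
  field

lemma besselT_half_sub {x ε : ℝ} (hx : 0 ≤ x) (h0 : 0 < ε) (h1 : ε < 1 / 2) :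
    besselT x (1 / 2 - ε) = exp (-x) * sin (π * ε) *
      ∫ u in Ioi (0 : ℝ), exp (-(x * u)) * (u * (u + 2)) ^ (ε - 1) := by
  rw [besselT_half_sub_eq_integral_sqrt hx h0 h1, integral_Ioi_eq_integral_comp_mul_add_two,
    ← integral_const_mul, ← integral_const_mul]
  refine setIntegral_congr_fun measurableSet_Ioi fun u hu => ?_
  have hu : 0 < u := hu
  have hsqrt : √(u * (u + 2) + 1) = u + 1 := by
    rw [show u * (u + 2) + 1 = (u + 1) ^ 2 by ring, sqrt_sq (by linarith)]
  simp only [hsqrt]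
  rw [show -((u + 1) * x) = -x + -(x * u) by ring, exp_add]
  field

/-! ### Integration by parts and derivatives at `ε = 0` -/

lemma integral_exp_neg_mul_mul_deriv {x : ℝ} {f f' : ℝ → ℝ}
    (hcont : ContinuousWithinAt f (Ici 0) 0) (hderiv : ∀ u ∈ Ioi (0 : ℝ), HasDerivAt f (f' u) u)
    (hf : IntegrableOn (fun u => exp (-(x * u)) * f u) (Ioi 0))
    (hf' : IntegrableOn (fun u => exp (-(x * u)) * f' u) (Ioi 0)) :
    ∫ u in Ioi (0 : ℝ), exp (-(x * u)) * f' u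
      = x * (∫ u in Ioi (0 : ℝ), exp (-(x * u)) * f u) - f 0 := by
  have hprod (u : ℝ) (hu : u ∈ Ioi 0) : HasDerivAt (fun u => exp (-(x * u)) * f u)
      (exp (-(x * u)) * f' u - x * (exp (-(x * u)) * f u)) u :=
    ((((hasDerivAt_id u).const_mul x).fun_neg.exp).fun_mul (hderiv u hu)).congr_deriv (by
      simp only [id_eq]
      ring)
  have hint := hf'.sub (hf.const_mul x)
  have hftc := integral_Ioi_of_hasDerivAt_of_tendsto
    (ContinuousWithinAt.mul (by fun_prop) hcont) hprod hint
    (tendsto_zero_of_hasDerivAt_of_integrableOn_Ioi hprod hint hf)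
  rw [integral_sub hf' (hf.const_mul x), integral_const_mul] at hftc
  simp only [Pi.mul_apply, mul_zero, neg_zero, exp_zero, one_mul] at hftc
  linarith

lemma integrableOn_exp_neg_mul_rpow_mul_rpow {x c t r : ℝ} (hx : 0 < x) (hc : 0 < c) (ht : -1 < t)
    (hr : r ≤ 1) :
    IntegrableOn (fun u : ℝ => exp (-(x * u)) * u ^ t * (u + c) ^ r) (Ioi 0) := by
  have hdom := ((integrableOn_rpow_mul_exp_neg_mul (t := t + 1) (by linarith) hx).add
    ((integrableOn_rpow_mul_exp_neg_mul ht hx).const_mul c)).const_mul (c ^ (r - 1))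
  refine Integrable.mono' hdom (by fun_prop) ?_
  filter_upwards [ae_restrict_mem measurableSet_Ioi] with u hu
  have hu : 0 < u := hu
  have hpow : (u + c) ^ r ≤ c ^ (r - 1) * (u + c) := by
    calc (u + c) ^ r = (u + c) ^ (r - 1) * (u + c) := by
          rw [← rpow_add_one (by positivity), sub_add_cancel]
      _ ≤ c ^ (r - 1) * (u + c) :=
          mul_le_mul_of_nonneg_right (rpow_le_rpow_of_nonpos hc (le_add_of_nonneg_left hu.le)
            (sub_nonpos.2 hr)) (add_pos hu hc).le
  rw [norm_of_nonneg (by positivity)]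
  calc exp (-(x * u)) * u ^ t * (u + c) ^ r
      ≤ exp (-(x * u)) * u ^ t * (c ^ (r - 1) * (u + c)) := by gcongr
    _ = c ^ (r - 1) * (u ^ (t + 1) * exp (-(x * u)) + c * (u ^ t * exp (-(x * u)))) := by
        rw [rpow_add_one hu.ne']
        ring

lemma integrableOn_exp_neg_mul_mul_add_rpow {x c t : ℝ} (hx : 0 < x) (hc : 0 < c) (h0 : -1 < t)
    (h1 : t ≤ 1) : IntegrableOn (fun u : ℝ => exp (-(x * u)) * (u * (u + c)) ^ t) (Ioi 0) := by
  refine (integrableOn_exp_neg_mul_rpow_mul_rpow hx hc h0 h1).congr_fun (fun u hu => ?_)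
    measurableSet_Ioi
  have hu : 0 < u := hu
  simp only [mul_assoc, mul_rpow hu.le (add_pos hu hc).le]

lemma integrableOn_div_add {f : ℝ → ℝ} {c : ℝ} (hc : 0 < c) (hf : IntegrableOn f (Ioi 0)) :
    IntegrableOn (fun u => f u / (u + c)) (Ioi 0) := by
  simp only [div_eq_mul_inv]
  refine hf.mul_bdd (c := c⁻¹) (by fun_prop) ?_
  filter_upwards [ae_restrict_mem measurableSet_Ioi] with u hu
  have hu : 0 < u := hu
  rw [norm_of_nonneg (by positivity)]
  exact inv_anti₀ hc (by linarith)

lemma integrableOn_exp_neg_mul_besselP_mul_log_pow {x c : ℝ} (hx : 0 < x) (hc : 0 < c) (n k : ℕ) :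
    IntegrableOn (fun u : ℝ => exp (-(x * u)) * besselP n (log (u + c)) * log u ^ k) (Ioi 0) := by
  have hpos : ∀ᵐ u ∂volume.restrict (Ioi (0 : ℝ)), 0 < u := ae_restrict_mem measurableSet_Ioi
  refine integrable_mul_log_pow hpos ?_ k
  filter_upwards [Ioi_mem_nhds (by norm_num : (-1 : ℝ) < 0)] with t ht
  simp only [mul_right_comm _ (besselP _ _)]
  refine integrable_mul_besselP_log (hpos.mono fun u hu => add_pos hu hc) ?_ n
  filter_upwards [Iic_mem_nhds one_pos] with r hr
  exact integrableOn_exp_neg_mul_rpow_mul_rpow hx hc ht hr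

lemma integral_exp_neg_mul_mul_add_rpow_by_parts {x c ε : ℝ} (hx : 0 < x) (hc : 0 < c)
    (h0 : 0 < ε) (h1 : ε ≤ 1) :
    c * ε * ∫ u in Ioi (0 : ℝ), exp (-(x * u)) * (u * (u + c)) ^ (ε - 1)
      = x * (∫ u in Ioi (0 : ℝ), exp (-(x * u)) * (u * (u + c)) ^ ε)
        - 2 * ε * ∫ u in Ioi (0 : ℝ), exp (-(x * u)) / (u + c) * (u * (u + c)) ^ ε := by
  have hderiv (u : ℝ) (hu : u ∈ Ioi 0) : HasDerivAt (fun u : ℝ => (u * (u + c)) ^ ε)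
      (c * ε * (u * (u + c)) ^ (ε - 1) + 2 * ε * ((u * (u + c)) ^ ε / (u + c))) u := by
    have hu : 0 < u := hu
    have hw : 0 < u * (u + c) := by positivity
    refine (((hasDerivAt_id u).fun_mul ((hasDerivAt_id u).add_const c)).rpow_const (p := ε)
      (Or.inl hw.ne')).congr_deriv ?_
    rw [← sub_add_cancel ε 1, rpow_add_one hw.ne', add_sub_cancel_right]
    simp only [id_eq]
    field
  have hI := integrableOn_exp_neg_mul_mul_add_rpow hx hc (t := ε) (by linarith) h1
  have hI1 := (integrableOn_exp_neg_mul_mul_add_rpow hx hc (t := ε - 1) (by linarith)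
    (by linarith)).const_mul (c * ε)
  have hI2 := (integrableOn_div_add hc hI).const_mul (2 * ε)
  have hsplit (u : ℝ) :
      exp (-(x * u)) * (c * ε * (u * (u + c)) ^ (ε - 1) + 2 * ε * ((u * (u + c)) ^ ε / (u + c)))
        = c * ε * (exp (-(x * u)) * (u * (u + c)) ^ (ε - 1))
          + 2 * ε * (exp (-(x * u)) * (u * (u + c)) ^ ε / (u + c)) := by ring
  have hparts := integral_exp_neg_mul_mul_deriv (x := x)
    (ContinuousWithinAt.rpow_const (by fun_prop) (Or.inr h0.le)) hderiv hI
    ((hI1.add hI2).congr (ae_of_all _ fun u => (hsplit u).symm))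
  simp only [hsplit] at hparts
  rw [integral_add hI1 hI2, integral_const_mul, integral_const_mul, zero_mul, zero_rpow h0.ne',
    sub_zero] at hparts
  simp only [div_mul_eq_mul_div]
  linarith

lemma besselP_log_eq {x c : ℝ} (hx : 0 < x) (hc : 0 < c) (n : ℕ) :
    besselP (n + 1) (log c)
      = x * (∫ u in Ioi (0 : ℝ), exp (-(x * u)) * besselP (n + 1) (log (u + c)))
        - (n + 1) * ∫ u in Ioi (0 : ℝ), exp (-(x * u)) / (u + c) * besselP n (log (u + c)) := by
  have hderiv (u : ℝ) (hu : 0 ≤ u) : HasDerivAt (fun u => besselP (n + 1) (log (u + c)))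
      ((n + 1) * (besselP n (log (u + c)) / (u + c))) u := by
    have huc : u + c ≠ 0 := by positivity
    refine ((hasDerivAt_besselP (n + 1) _).comp u
      (((hasDerivAt_id u).add_const c).log huc)).congr_deriv ?_
    push_cast [Nat.add_sub_cancel, id_eq]
    ring
  have hint (m : ℕ) :
      IntegrableOn (fun u => exp (-(x * u)) * besselP m (log (u + c))) (Ioi 0) := by
    simpa using integrableOn_exp_neg_mul_besselP_mul_log_pow hx hc m 0
  have hsplit (u : ℝ) : exp (-(x * u)) * ((n + 1) * (besselP n (log (u + c)) / (u + c)))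
      = (n + 1) * (exp (-(x * u)) * besselP n (log (u + c)) / (u + c)) := by ring
  have hparts := integral_exp_neg_mul_mul_deriv (x := x)
    (hderiv 0 le_rfl).continuousAt.continuousWithinAt (fun u hu => hderiv u (mem_Ioi.1 hu).le)
    (hint (n + 1)) (((integrableOn_div_add hc (hint n)).const_mul
      (n + 1 : ℝ)).congr (ae_of_all _ fun u => (hsplit u).symm))
  simp only [hsplit, integral_const_mul, zero_add] at hparts
  simp only [div_mul_eq_mul_div]
  linarith

lemma mul_besselT_half_sub {x ε : ℝ} (hx : 0 < x) (h0 : 0 < ε) (h1 : ε < 1 / 2) :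
    ε * besselT x (1 / 2 - ε) = π / 2 * exp (-x) *
      (x * (sin (π * ε) / π * ∫ u in Ioi (0 : ℝ), exp (-(x * u)) * (u * (u + 2)) ^ ε)
        - 2 * (ε * (sin (π * ε) / π *
            ∫ u in Ioi (0 : ℝ), exp (-(x * u)) / (u + 2) * (u * (u + 2)) ^ ε))) := by
  have hparts := integral_exp_neg_mul_mul_add_rpow_by_parts hx two_pos h0 (by linarith)
  have hsin : sin (π * ε) = π * (sin (π * ε) / π) := (mul_div_cancel₀ _ pi_ne_zero).symm
  rw [besselT_half_sub hx.le h0 h1]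
  linear_combination exp (-x) * π / 2 * (sin (π * ε) / π) * hparts
    + ε * exp (-x) * (∫ u in Ioi (0 : ℝ), exp (-(x * u)) * (u * (u + 2)) ^ (ε - 1)) * hsin

lemma ae_mul_add_pos {c : ℝ} (hc : 0 < c) :
    ∀ᵐ u ∂volume.restrict (Ioi (0 : ℝ)), 0 < u * (u + c) := by
  filter_upwards [ae_restrict_mem measurableSet_Ioi] with u hu
  have hu : 0 < u := hu
  positivity

lemma eventually_integrableOn_exp_neg_mul_mul_add_rpow {x c : ℝ} (hx : 0 < x) (hc : 0 < c) :
    ∀ᶠ t in 𝓝 (0 : ℝ),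
      IntegrableOn (fun u : ℝ => exp (-(x * u)) * (u * (u + c)) ^ t) (Ioi 0) := by
  filter_upwards [Ioo_mem_nhds (by norm_num : (-1 : ℝ) < 0) one_pos] with t ht
  exact integrableOn_exp_neg_mul_mul_add_rpow hx hc ht.1 ht.2.le

lemma eventually_integrableOn_exp_neg_mul_div_mul_mul_add_rpow {x c : ℝ} (hx : 0 < x)
    (hc : 0 < c) : ∀ᶠ t in 𝓝 (0 : ℝ),
      IntegrableOn (fun u : ℝ => exp (-(x * u)) / (u + c) * (u * (u + c)) ^ t) (Ioi 0) := by
  filter_upwards [eventually_integrableOn_exp_neg_mul_mul_add_rpow hx hc] with t ht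
  simpa only [div_mul_eq_mul_div] using integrableOn_div_add hc ht

lemma analyticAt_besselT_half_sub_zero (x : ℝ) :
    AnalyticAt ℝ (fun ε => besselT x (1 / 2 - ε)) 0 :=
  (analyticAt_besselT x one_half_pos).comp_of_eq (by fun_prop) (sub_zero _)

lemma mul_besselT_half_sub_eventuallyEq {x : ℝ} (hx : 0 < x) :
    (fun ε => ε * besselT x (1 / 2 - ε)) =ᶠ[𝓝 0] fun ε => π / 2 * exp (-x) *
      (x * (sin (π * ε) / π * ∫ u in Ioi (0 : ℝ), exp (-(x * u)) * (u * (u + 2)) ^ ε)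
        - 2 * (ε * (sin (π * ε) / π *
            ∫ u in Ioi (0 : ℝ), exp (-(x * u)) / (u + 2) * (u * (u + 2)) ^ ε))) := by
  have hpos := ae_mul_add_pos (two_pos (α := ℝ))
  have hJ := analyticAt_sin_mul_integral_mul_rpow hpos
    (eventually_integrableOn_exp_neg_mul_mul_add_rpow hx two_pos)
  have hK := analyticAt_sin_mul_integral_mul_rpow hpos
    (eventually_integrableOn_exp_neg_mul_div_mul_mul_add_rpow hx two_pos)
  refine ((analyticAt_id.fun_mul
    (analyticAt_besselT_half_sub_zero x)).frequently_eq_iff_eventually_eq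
      (analyticAt_const.fun_mul ((analyticAt_const.fun_mul hJ).fun_sub
        (analyticAt_const.fun_mul (analyticAt_id.fun_mul hK))))).1 ?_
  have hright : ∀ᶠ ε : ℝ in 𝓝[>] 0, ε ∈ Ioo (0 : ℝ) (1 / 2) := Ioo_mem_nhdsGT one_half_pos
  exact (hright.mono fun ε hε => mul_besselT_half_sub hx hε.1 hε.2).frequently.filter_mono
    (nhdsWithin_mono _ fun _ h => ne_of_gt h)

lemma iteratedDeriv_succ_id_mul_zero {f : ℝ → ℝ} {n : ℕ} (hf : ContDiffAt ℝ (n + 1 : ℕ) f 0) :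
    iteratedDeriv (n + 1) (fun t => t * f t) 0 = (n + 1) * iteratedDeriv n f 0 := by
  rw [iteratedDeriv_fun_mul (by fun_prop) hf, Finset.sum_eq_single 1]
  · simp [iteratedDeriv_fun_id_zero]
  · intro k _ hk
    simp [iteratedDeriv_fun_id_zero, hk]
  · simp

lemma integral_Ioi_mul_besselP_log_mul_add {c : ℝ} (hc : 0 < c) (g : ℝ → ℝ) (n : ℕ) :
    ∫ u in Ioi (0 : ℝ), g u * besselP n (log (u * (u + c)))
      = ∫ u in Ioi (0 : ℝ), g u * besselP n (log (u + c) + log u) := by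
  refine setIntegral_congr_fun measurableSet_Ioi fun u hu => ?_
  have hu : 0 < u := hu
  simp only [log_mul hu.ne' (add_pos hu hc).ne', add_comm (log u)]

lemma iteratedDeriv_besselT_half_sub_zero {x : ℝ} (hx : 0 < x) (n : ℕ) :
    (n + 1) * iteratedDeriv n (fun ε => besselT x (1 / 2 - ε)) 0
      = π / 2 * exp (-x) *
        (x * (∫ u in Ioi (0 : ℝ), exp (-(x * u)) * besselP (n + 1) (log (u + 2) + log u))
          - 2 * ((n + 1) *
            ∫ u in Ioi (0 : ℝ), exp (-(x * u)) / (u + 2) * besselP n (log (u + 2) + log u))) := by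
  have hpos := ae_mul_add_pos (two_pos (α := ℝ))
  have hJ := eventually_integrableOn_exp_neg_mul_mul_add_rpow hx two_pos
  have hK := eventually_integrableOn_exp_neg_mul_div_mul_mul_add_rpow hx two_pos
  have hSJ := analyticAt_sin_mul_integral_mul_rpow hpos hJ
  have hSK := analyticAt_sin_mul_integral_mul_rpow hpos hK
  have hid : AnalyticAt ℝ (fun ε : ℝ => ε) 0 := analyticAt_id
  have hderiv := (mul_besselT_half_sub_eventuallyEq hx).iteratedDeriv_eq (n + 1)
  rw [iteratedDeriv_succ_id_mul_zero (analyticAt_besselT_half_sub_zero x).contDiffAt,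
    iteratedDeriv_const_mul_field,
    iteratedDeriv_fun_sub (analyticAt_const.fun_mul hSJ).contDiffAt
      (analyticAt_const.fun_mul (hid.fun_mul hSK)).contDiffAt,
    iteratedDeriv_const_mul_field, iteratedDeriv_const_mul_field,
    iteratedDeriv_succ_id_mul_zero hSK.contDiffAt,
    iteratedDeriv_sin_mul_integral_mul_rpow_zero hpos hJ,
    iteratedDeriv_sin_mul_integral_mul_rpow_zero hpos hK] at hderiv
  simpa only [integral_Ioi_mul_besselP_log_mul_add two_pos] using hderiv

/-! ### The terms `A₁`, `A₃` and `A₄` -/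

lemma add_one_mul_sum_choose_mul_integral_besselF (g : ℝ → ℝ) (n : ℕ) :
    (n + 1) * ∑ k ∈ Finset.range n, (n.choose k : ℝ) * ∫ u in Ioi (0 : ℝ),
        g u * (besselF n k (u + 1) / (2 * π * Complex.I)).re * log u ^ (k + 1) / (k + 1)
      = ∑ k ∈ Finset.range (n + 1), ((n + 1).choose (k + 1) : ℝ) * ∫ u in Ioi (0 : ℝ),
          g u * besselP (n + 1 - (k + 1)) (log (u + 2)) * log u ^ (k + 1) := by
  rw [Finset.sum_range_succ, Nat.sub_self, Finset.mul_sum]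
  simp only [besselP_zero, mul_zero, zero_mul, integral_zero, add_zero]
  refine Finset.sum_congr rfl fun k _ => ?_
  have hchoose : (n + 1 : ℝ) * n.choose k = (n + 1).choose (k + 1) * (k + 1) := by
    exact_mod_cast Nat.add_one_mul_choose_eq n k
  simp only [re_besselF_div, add_assoc, one_add_one_eq_two, integral_div, Nat.add_sub_add_right]
  rw [← mul_assoc, hchoose]
  field

lemma sum_choose_mul_integral_besselF_div (g : ℝ → ℝ) (n : ℕ) :
    ∑ k ∈ Finset.range n, (n.choose k : ℝ) * ((n - k : ℕ) : ℝ) * ∫ u in Ioi (0 : ℝ),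
        g u * (besselF (n - 1) k (u + 1) / (2 * π * Complex.I)).re * log u ^ (k + 1)
          / ((k + 1) * (u + 2))
      = ∑ k ∈ Finset.range n, (n.choose (k + 1) : ℝ) * ∫ u in Ioi (0 : ℝ),
          g u / (u + 2) * besselP (n - (k + 1)) (log (u + 2)) * log u ^ (k + 1) := by
  refine Finset.sum_congr rfl fun k _ => ?_
  have hchoose : (n.choose k : ℝ) * ((n - k : ℕ) : ℝ) = n.choose (k + 1) * (k + 1) := by
    exact_mod_cast (Nat.choose_succ_right_eq n k).symm
  rw [hchoose, mul_assoc, ← integral_const_mul]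
  congr 2
  funext u
  rw [re_besselF_div, add_assoc, one_add_one_eq_two, Nat.sub_sub, add_comm 1 k]
  field

lemma integral_exp_neg_mul_besselP_log_add_log {x : ℝ} (hx : 0 < x) (n : ℕ) :
    ∫ u in Ioi (0 : ℝ), exp (-(x * u)) * besselP (n + 1) (log (u + 2) + log u)
      = (∫ u in Ioi (0 : ℝ), exp (-(x * u)) * besselP (n + 1) (log (u + 2)))
        + (n + 1) * ∑ k ∈ Finset.range n, (n.choose k : ℝ) * ∫ u in Ioi (0 : ℝ),
            exp (-(x * u)) * (besselF n k (u + 1) / (2 * π * Complex.I)).re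
              * log u ^ (k + 1) / (k + 1) := by
  rw [add_one_mul_sum_choose_mul_integral_besselF]
  exact integral_mul_besselP_add (n + 1) fun k =>
    integrableOn_exp_neg_mul_besselP_mul_log_pow hx two_pos (n + 1 - k) k

lemma integral_exp_neg_mul_div_besselP_log_add_log {x : ℝ} (hx : 0 < x) (n : ℕ) :
    ∫ u in Ioi (0 : ℝ), exp (-(x * u)) / (u + 2) * besselP n (log (u + 2) + log u)
      = (∫ u in Ioi (0 : ℝ), exp (-(x * u)) / (u + 2) * besselP n (log (u + 2)))
        + ∑ k ∈ Finset.range n, (n.choose k : ℝ) * ((n - k : ℕ) : ℝ) * ∫ u in Ioi (0 : ℝ),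
            exp (-(x * u)) * (besselF (n - 1) k (u + 1) / (2 * π * Complex.I)).re
              * log u ^ (k + 1) / ((k + 1) * (u + 2)) := by
  rw [sum_choose_mul_integral_besselF_div]
  refine integral_mul_besselP_add n fun k => ?_
  simp only [div_mul_eq_mul_div]
  exact integrableOn_div_add two_pos
    (integrableOn_exp_neg_mul_besselP_mul_log_pow hx two_pos (n - k) k)

lemma add_one_mul_average_re_log_add_mul_I_pow {x c : ℝ} (hx : 0 < x) (hc : 0 < c) (n : ℕ) :
    (n + 1) * (1 / (2 * π) * ∫ φ in (-π)..π, (((log c : ℂ) + φ * Complex.I) ^ n).re)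
      = x * (∫ u in Ioi (0 : ℝ), exp (-(x * u)) * besselP (n + 1) (log (u + c)))
        - (n + 1) * ∫ u in Ioi (0 : ℝ), exp (-(x * u)) / (u + c) * besselP n (log (u + c)) := by
  rw [← besselP_log_eq hx hc, integral_re_add_mul_I_pow]
  field

lemma iteratedDeriv_besselT_half (x : ℝ) (n : ℕ) :
    iteratedDeriv n (besselT x) (1 / 2)
      = (-1) ^ n * iteratedDeriv n (fun ε => besselT x (1 / 2 - ε)) 0 := by
  rw [iteratedDeriv_comp_const_sub]
  simp only [sub_zero, smul_eq_mul]
  rw [← mul_assoc, ← mul_pow, neg_one_mul, neg_neg, one_pow, one_mul]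

theorem stmt3 (x : ℝ) (hx : 0 < x) (n : ℕ) (hn : 1 ≤ n) :
    iteratedDeriv n
        (fun s : ℝ => ∫ u in Set.Ioi (0:ℝ), Real.cos (x * u) / (u ^ 2 + 1) ^ (s + 1/2)) (1/2)
      = (-1) ^ n * ((Real.pi / 2) * Real.exp (-x)) *
        (((1 / (2 * Real.pi)) *
            ∫ φ in (-Real.pi)..Real.pi, (((Real.log 2 : ℂ) + φ * Complex.I) ^ n).re)
          + (- ∫ u in Set.Ioi (0:ℝ),
                Real.exp (-(x * u)) * besselP n (Real.log (u + 2) + Real.log u) / (u + 2))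
          + (x * ∑ k ∈ Finset.range n, (n.choose k : ℝ) *
              ∫ u in Set.Ioi (0:ℝ),
                Real.exp (-(x * u)) * (besselF n k (u + 1) / (2 * Real.pi * Complex.I)).re
                  * (Real.log u) ^ (k + 1) / (k + 1))
          + (- ∑ k ∈ Finset.range n, (n.choose k : ℝ) * ((n - k : ℕ) : ℝ) *
              ∫ u in Set.Ioi (0:ℝ),
                Real.exp (-(x * u)) * (besselF (n - 1) k (u + 1) / (2 * Real.pi * Complex.I)).re
                  * (Real.log u) ^ (k + 1) / ((k + 1) * (u + 2)))) := by
  change iteratedDeriv n (besselT x) (1 / 2) = _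
  have hderiv := iteratedDeriv_besselT_half_sub_zero hx n
  have hA₁ := add_one_mul_average_re_log_add_mul_I_pow hx two_pos n
  have hA₃ := integral_exp_neg_mul_besselP_log_add_log hx n
  have hA₄ := integral_exp_neg_mul_div_besselP_log_add_log hx n
  simp only [mul_div_right_comm (exp _) (besselP _ _)]
  rw [iteratedDeriv_besselT_half, mul_assoc]
  congr 1
  refine mul_left_cancel₀ n.cast_add_one_ne_zero (hderiv.trans ?_)
  linear_combination π / 2 * exp (-x) * (x * hA₃ - (n + 1) * hA₄ - hA₁)
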